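/- Let θ_j ∈ (0,1/2) for j ≥ 0, let S be a set of nonnegative integers and let g^{(1)} ∈ L^1(ℝ) be the associated oscillating function. Then for every ξ ∈ ℝ with ξ ≠ 0, the inverse Fourier transform satisfies ǧ^{(1)}(ξ) = ∑_{k∈S} (−1)^k · (sin((1−2θ_k) Θ_k π ξ) / (π ξ)) · 2^k ∏_{j=0}^{k−1} cos((1−θ_j) Θ_j π ξ), and this series converges uniformly on {ξ : |ξ| ≥ δ} for every δ > 0. -/

import Mathlib

open MeasureTheory Filter
open scoped FourierTransform Real

/-- `Θ_k = θ_0 θ_1 ⋯ θ_{k-1}`. -/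
noncomputable def Theta (θ : ℕ → ℝ) (k : ℕ) : ℝ := ∏ j ∈ Finset.range k, θ j

/-- Signs `±1` indexed by booleans. -/
def sgn (b : Bool) : ℝ := if b then 1 else -1

/-- Midpoint `m_σ = ∑_{j<k} σ_j (1-θ_j) Θ_j / 2` associated to a sign pattern `σ ∈ {−1,1}^k`. -/
noncomputable def cmid (θ : ℕ → ℝ) {k : ℕ} (σ : Fin k → Bool) : ℝ :=
  ∑ j : Fin k, sgn (σ j) * (1 - θ (j : ℕ)) * Theta θ (j : ℕ) / 2

/-- The black interval of generation `k`: open interval of length `(1-2θ_k) Θ_k`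
centered at `m_σ`. -/
noncomputable def blackInterval (θ : ℕ → ℝ) {k : ℕ} (σ : Fin k → Bool) : Set ℝ :=
  Set.Ioo (cmid θ σ - (1 - 2 * θ k) * Theta θ k / 2)
    (cmid θ σ + (1 - 2 * θ k) * Theta θ k / 2)

/-- The oscillating function `g^{(1)} = ∑_{k∈S} (−1)^k ∑_σ 1_{B_σ}`, viewed as a
complex-valued function. -/
noncomputable def oscFunC (θ : ℕ → ℝ) (S : Set ℕ) (x : ℝ) : ℂ :=
  ((∑' k : ℕ, S.indicator
    (fun k => (-1 : ℝ) ^ k *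
      ∑ σ : Fin k → Bool, (blackInterval θ σ).indicator 1 x) k : ℝ) : ℂ)

/-- The `k`-th term of the cosine-product expansion of `ǧ^{(1)}(ξ)`:
`(−1)^k (sin((1−2θ_k) Θ_k π ξ)/(π ξ)) 2^k ∏_{j<k} cos((1−θ_j) Θ_j π ξ)` for `k ∈ S`,
and `0` for `k ∉ S`. -/
noncomputable def oscFourierTerm (θ : ℕ → ℝ) (S : Set ℕ) (k : ℕ) (ξ : ℝ) : ℂ :=
  ((S.indicator
    (fun k => (-1 : ℝ) ^ k * (Real.sin ((1 - 2 * θ k) * Theta θ k * π * ξ) / (π * ξ)) *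
      2 ^ k * ∏ j ∈ Finset.range k, Real.cos ((1 - θ j) * Theta θ j * π * ξ)) k : ℝ) : ℂ)

lemma Theta_pos' (θ : ℕ → ℝ) (hθ : ∀ j, θ j ∈ Set.Ioo (0 : ℝ) (1 / 2)) (k : ℕ) :
    0 < Theta θ k := Finset.prod_pos fun j _ => (hθ j).1

/-- The length bound for generation `k`. -/
noncomputable def genLen (θ : ℕ → ℝ) (k : ℕ) : ℝ := 2 ^ k * ((1 - 2 * θ k) * Theta θ k)

lemma genLen_nonneg (θ : ℕ → ℝ) (hθ : ∀ j, θ j ∈ Set.Ioo (0 : ℝ) (1 / 2)) (k : ℕ) :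
    0 ≤ genLen θ k := by
  have h1 := Theta_pos' θ hθ k
  have h2 := (hθ k).2
  have : 0 ≤ 1 - 2 * θ k := by linarith
  unfold genLen; positivity

lemma genLen_summable (θ : ℕ → ℝ) (hθ : ∀ j, θ j ∈ Set.Ioo (0 : ℝ) (1 / 2)) :
    Summable (genLen θ) := by
  refine summable_of_sum_range_le (c := 1) (genLen_nonneg θ hθ) fun n => ?_
  have : ∀ i, genLen θ i = 2 ^ i * Theta θ i - 2 ^ (i+1) * Theta θ (i+1) := by
    intro i
    simp only [genLen, Theta, Finset.prod_range_succ]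
    ring
  simp only [this]
  rw [Finset.sum_range_sub' (fun i => 2 ^ i * Theta θ i) n]
  have := Theta_pos' θ hθ n
  have h : 0 ≤ 2 ^ n * Theta θ n := by positivity
  simp only [Theta, pow_zero, Finset.range_zero, Finset.prod_empty] at h ⊢
  linarith

/-- Oscillation terms. -/
noncomputable def genFun (θ : ℕ → ℝ) (S : Set ℕ) (k : ℕ) (x : ℝ) : ℝ :=
  S.indicator (fun k => (-1 : ℝ) ^ k *
      ∑ σ : Fin k → Bool, (blackInterval θ σ).indicator 1 x) k

lemma integral_Ioo_exp (m h ξ : ℝ) (hh : 0 ≤ h) (hξ : ξ ≠ 0) :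
    ∫ x in Set.Ioo (m - h / 2) (m + h / 2), Complex.exp ((2 * π * ξ * Complex.I) * x) =
      Complex.exp (2 * π * ξ * Complex.I * m) * ((Real.sin (h * π * ξ) / (π * ξ) : ℝ) : ℂ) := by
  have hc : (2 * π * ξ * Complex.I : ℂ) ≠ 0 := by
    simp [hξ, Real.pi_ne_zero]
  rw [← integral_Ioc_eq_integral_Ioo, ← intervalIntegral.integral_of_le (by linarith),
    integral_exp_mul_complex hc]
  have e1 : (2 * π * ξ * Complex.I * ((m + h / 2 : ℝ) : ℂ)) =
      2 * π * ξ * Complex.I * m + (h * π * ξ : ℝ) * Complex.I := by push_cast; ring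
  have e2 : (2 * π * ξ * Complex.I * ((m - h / 2 : ℝ) : ℂ)) =
      2 * π * ξ * Complex.I * m + -((h * π * ξ : ℝ) : ℂ) * Complex.I := by push_cast; ring
  rw [e1, e2, Complex.exp_add, Complex.exp_add, Complex.ofReal_div, Complex.ofReal_sin,
    Complex.exp_mul_I, Complex.exp_mul_I, Complex.cos_neg, Complex.sin_neg]
  have hπ : (π : ℂ) ≠ 0 := by simp [Real.pi_ne_zero]
  have hξ' : (ξ : ℂ) ≠ 0 := by simp [hξ]
  push_cast
  field_simp
  ring

lemma sum_exp_cmid (θ : ℕ → ℝ) (k : ℕ) (ξ : ℝ) :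
    ∑ σ : Fin k → Bool, Complex.exp (2 * π * ξ * Complex.I * (cmid θ σ : ℝ)) =
      ((2 ^ k * ∏ j ∈ Finset.range k, Real.cos ((1 - θ j) * Theta θ j * π * ξ) : ℝ) : ℂ) := by
  have h1 : ∀ σ : Fin k → Bool, Complex.exp (2 * π * ξ * Complex.I * (cmid θ σ : ℝ)) =
      ∏ j : Fin k, Complex.exp (((sgn (σ j) * ((1 - θ j) * Theta θ j * π * ξ) : ℝ) : ℂ)
        * Complex.I) := by
    intro σ
    rw [← Complex.exp_sum]
    congr 1
    simp only [cmid]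
    push_cast
    rw [Finset.mul_sum]
    refine Finset.sum_congr rfl fun j _ => ?_
    ring
  simp only [h1]
  rw [← Fintype.prod_sum (fun (j : Fin k) (b : Bool) =>
    Complex.exp (((sgn b * ((1 - θ j) * Theta θ j * π * ξ) : ℝ) : ℂ) * Complex.I))]
  have h2 : ∀ y : ℝ, ∑ b : Bool, Complex.exp (((sgn b * y : ℝ) : ℂ) * Complex.I)
      = 2 * ((Real.cos y : ℝ) : ℂ) := by
    intro y
    simp only [Fintype.sum_bool, sgn]
    simp [Complex.exp_mul_I, ← Complex.ofReal_neg]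
    simp [Complex.exp_mul_I]
    ring
  simp only [h2]
  rw [Finset.prod_mul_distrib, Finset.prod_range]
  simp

lemma integrableOn_exp (c : ℂ) (a b : ℝ) :
    Integrable ((Set.Ioo a b).indicator fun x : ℝ => Complex.exp (c * x)) := by
  rw [integrable_indicator_iff measurableSet_Ioo]
  exact (Continuous.integrableOn_Icc (by fun_prop)).mono_set Set.Ioo_subset_Icc_self

lemma exp_mul_genFun (θ : ℕ → ℝ) (S : Set ℕ) (k : ℕ) (c : ℂ) :
    (fun x : ℝ => Complex.exp (c * x) * (genFun θ S k x : ℂ)) = fun x =>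
      S.indicator (fun k => (-1 : ℂ) ^ k) k * ∑ σ : Fin k → Bool,
        (blackInterval θ σ).indicator (fun x : ℝ => Complex.exp (c * x)) x := by
  funext x
  by_cases hk : k ∈ S
  · simp only [genFun, Set.indicator_of_mem hk]
    push_cast
    rw [mul_left_comm, Finset.mul_sum]
    congr 1
    refine Finset.sum_congr rfl fun σ _ => ?_
    by_cases hx : x ∈ blackInterval θ σ <;> simp [hx]
  · simp [genFun, hk]

lemma integrable_term (θ : ℕ → ℝ) (S : Set ℕ) (k : ℕ) (c : ℂ) :
    Integrable (fun x : ℝ => Complex.exp (c * x) * (genFun θ S k x : ℂ)) := by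
  rw [exp_mul_genFun]
  refine Integrable.const_mul (integrable_finsetSum _ fun σ _ => ?_) _
  exact integrableOn_exp _ _ _

lemma integral_term (θ : ℕ → ℝ) (hθ : ∀ j, θ j ∈ Set.Ioo (0 : ℝ) (1 / 2))
    (S : Set ℕ) (k : ℕ) (ξ : ℝ) (hξ : ξ ≠ 0) :
    ∫ x : ℝ, Complex.exp ((2 * π * ξ * Complex.I) * x) * (genFun θ S k x : ℂ) =
      oscFourierTerm θ S k ξ := by
  rw [exp_mul_genFun, integral_const_mul, integral_finsetSum _ fun σ _ => ?_]
  · have h0 : 0 ≤ (1 - 2 * θ k) * Theta θ k := by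
      have h1 := Theta_pos' θ hθ k
      have h2 := (hθ k).2
      exact mul_nonneg (by linarith) h1.le
    have : ∀ σ : Fin k → Bool, ∫ x : ℝ, (blackInterval θ σ).indicator
        (fun x : ℝ => Complex.exp ((2 * π * ξ * Complex.I) * x)) x =
          Complex.exp (2 * π * ξ * Complex.I * (cmid θ σ : ℝ)) *
          ((Real.sin ((1 - 2 * θ k) * Theta θ k * π * ξ) / (π * ξ) : ℝ) : ℂ) := fun σ => by
      rw [blackInterval, integral_indicator measurableSet_Ioo]
      exact integral_Ioo_exp _ _ ξ h0 hξ
    simp only [this]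
    rw [← Finset.sum_mul, sum_exp_cmid, oscFourierTerm]
    by_cases hk : k ∈ S
    · simp only [Set.indicator_of_mem hk]
      push_cast
      ring
    · simp [hk]
  · exact integrableOn_exp _ _ _

lemma norm_term_le (θ : ℕ → ℝ) (hθ : ∀ j, θ j ∈ Set.Ioo (0 : ℝ) (1 / 2))
    (S : Set ℕ) (k : ℕ) (ξ : ℝ) :
    ∫ x : ℝ, ‖Complex.exp ((2 * π * ξ * Complex.I) * x) * (genFun θ S k x : ℂ)‖ ≤
      genLen θ k := by
  have h0 : 0 ≤ (1 - 2 * θ k) * Theta θ k := by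
    have h1 := Theta_pos' θ hθ k
    have h2 := (hθ k).2
    exact mul_nonneg (by linarith) h1.le
  have hi : ∀ σ : Fin k → Bool, Integrable ((blackInterval θ σ).indicator (1 : ℝ → ℝ)) := by
    intro σ
    rw [blackInterval, integrable_indicator_iff measurableSet_Ioo]
    exact (Continuous.integrableOn_Icc (by exact continuous_const)).mono_set
      Set.Ioo_subset_Icc_self
  have hle : ∀ x : ℝ, ‖Complex.exp ((2 * π * ξ * Complex.I) * x) * (genFun θ S k x : ℂ)‖ ≤
      ∑ σ : Fin k → Bool, (blackInterval θ σ).indicator (1 : ℝ → ℝ) x := by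
    intro x
    have hs : 0 ≤ ∑ σ : Fin k → Bool, (blackInterval θ σ).indicator (1 : ℝ → ℝ) x :=
      Finset.sum_nonneg fun σ _ => Set.indicator_nonneg (fun _ _ => zero_le_one) _
    have : (2 * π * ξ * Complex.I) * x = ((2 * π * ξ * x : ℝ) : ℂ) * Complex.I := by
      push_cast; ring
    rw [norm_mul, this, Complex.norm_exp_ofReal_mul_I, one_mul, Complex.norm_real]
    by_cases hk : k ∈ S
    · simp only [genFun, Set.indicator_of_mem hk]
      rw [norm_mul, norm_pow, norm_neg, norm_one, one_pow, one_mul, Real.norm_of_nonneg hs]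
    · simpa [genFun, hk] using hs
  refine (integral_mono (integrable_term θ S k _).norm (integrable_finsetSum _ fun σ _ => hi σ)
    hle).trans (le_of_eq ?_)
  rw [integral_finsetSum _ fun σ _ => hi σ]
  have : ∀ σ : Fin k → Bool, ∫ x : ℝ, (blackInterval θ σ).indicator (1 : ℝ → ℝ) x =
      (1 - 2 * θ k) * Theta θ k := by
    intro σ
    rw [blackInterval, integral_indicator_one measurableSet_Ioo, Measure.real, Real.volume_Ioo,
      ENNReal.toReal_ofReal (by linarith)]
    ring
  simp [this, genLen]

lemma hasSum_main (θ : ℕ → ℝ) (hθ : ∀ j, θ j ∈ Set.Ioo (0 : ℝ) (1 / 2))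
    (S : Set ℕ) (ξ : ℝ) (hξ : ξ ≠ 0) :
    HasSum (fun k => oscFourierTerm θ S k ξ) (𝓕⁻ (oscFunC θ S) ξ) := by
  have h := hasSum_integral_of_summable_integral_norm (μ := volume)
    (F := fun k (x : ℝ) => Complex.exp ((2 * π * ξ * Complex.I) * x) * (genFun θ S k x : ℂ))
    (fun k => integrable_term θ S k _)
    (Summable.of_nonneg_of_le (fun k => integral_nonneg fun x => norm_nonneg _)
      (fun k => norm_term_le θ hθ S k ξ) (genLen_summable θ hθ))
  simp only [integral_term θ hθ S _ ξ hξ] at h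
  suffices he : 𝓕⁻ (oscFunC θ S) ξ = ∫ (a : ℝ), ∑' (i : ℕ),
      Complex.exp (2 * π * ξ * Complex.I * a) * (genFun θ S i a : ℂ) by
    rw [he]; exact h
  rw [Real.fourierInv_eq']
  refine integral_congr_ae (Eventually.of_forall fun x => ?_)
  simp only [smul_eq_mul]
  rw [tsum_mul_left, oscFunC, Complex.ofReal_tsum]
  congr 2
  simp
  ring

/-- The inverse Fourier transform of the oscillating function `g^{(1)}` is given, at every
`ξ ≠ 0`, by the series `∑_{k∈S} (−1)^k (sin((1−2θ_k)Θ_k πξ)/(πξ)) 2^k ∏_{j<k} cos((1−θ_j)Θ_j πξ)`,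
which moreover converges uniformly on `{|ξ| ≥ δ}` for every `δ > 0`. -/
theorem fourierInv_oscFun_eq (θ : ℕ → ℝ) (hθ : ∀ j, θ j ∈ Set.Ioo (0 : ℝ) (1 / 2))
    (S : Set ℕ) :
    (∀ ξ : ℝ, ξ ≠ 0 →
      Tendsto (fun n : ℕ => ∑ k ∈ Finset.range n, oscFourierTerm θ S k ξ) atTop
        (nhds (𝓕⁻ (oscFunC θ S) ξ))) ∧
    (∀ δ : ℝ, 0 < δ →
      TendstoUniformlyOn (fun (n : ℕ) (ξ : ℝ) => ∑ k ∈ Finset.range n, oscFourierTerm θ S k ξ)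
        (𝓕⁻ (oscFunC θ S)) atTop {ξ : ℝ | δ ≤ |ξ|}) := by
  refine ⟨fun ξ hξ => (hasSum_main θ hθ S ξ hξ).tendsto_sum_nat, fun δ hδ => ?_⟩
  have hne : ∀ ξ ∈ {ξ : ℝ | δ ≤ |ξ|}, ξ ≠ 0 := by
    intro ξ hξ
    exact abs_pos.1 (lt_of_lt_of_le hδ hξ)
  refine (tendstoUniformlyOn_tsum_nat (genLen_summable θ hθ) fun k ξ hξ => ?_).congr_right
    fun ξ hξ => (hasSum_main θ hθ S ξ (hne ξ hξ)).tsum_eq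
  rw [← integral_term θ hθ S k ξ (hne ξ hξ)]
  exact (norm_integral_le_integral_norm _).trans (norm_term_le θ hθ S k ξ)
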